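/- For all real a > 0, b > 0 and α > 0, letting q(x) = a·b·x^{a−1}·(1 − x^a)^{b−1} be the Kumaraswamy(a,b) density and p(x) = α·x^{α−1} be the Beta(α, 1) density on (0,1), the Kullback–Leibler divergence satisfies ∫₀¹ q(x)·log(q(x)/p(x)) dx = ((a − α)/a)·(−γ − ψ(b) − 1/b) + log(a·b/α) − (b − 1)/b, where γ is the Euler–Mascheroni constant and ψ(b) is the derivative of log Γ at b. With α = c/L, this is the closed-form KL term KL(q(π_l) ‖ p(π_l)) used in training beta-Bernoulli Graph DropConnect. -/

import Mathlib

open Real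

/-- The digamma function `ψ`, the derivative of `log ∘ Γ`. -/
noncomputable def digamma (x : ℝ) : ℝ := deriv (fun y => Real.log (Real.Gamma y)) x

/-- The Kumaraswamy(a, b) density `q`. -/
noncomputable def kumaraswamyPdf (a b x : ℝ) : ℝ :=
  a * b * x ^ (a - 1) * (1 - x ^ a) ^ (b - 1)

/-- The Beta(α, 1) density `p(x) = α x^{α-1}` on `(0,1)`. -/
noncomputable def betaAlphaOnePdf (α x : ℝ) : ℝ := α * x ^ (α - 1)

open MeasureTheory ProbabilityTheory Set Topology

/-! The substitution `t = x ^ a` turns the Kumaraswamy(a, b) law into the Beta(1, b) law and the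
log-likelihood ratio into an affine combination of `log t` and `log (1 - t)`. Under Beta(s, r) the
moment generating function of `log t` is `B(s + u, r) / B(s, r)`, so its cumulant generating
function has derivative `ψ(s) - ψ(s + r)` at `0`, which is therefore the mean of `log t`; the
symmetry `t ↦ 1 - t` gives the mean of `log (1 - t)`. -/

section Digamma

variable {x : ℝ}

lemma differentiableAt_Gamma_of_pos (hx : 0 < x) : DifferentiableAt ℝ Gamma x :=
  differentiableAt_Gamma fun m => by linarith [m.cast_nonneg (α := ℝ)]

lemma hasDerivAt_log_Gamma (hx : 0 < x) :
    HasDerivAt (fun y => log (Gamma y)) (digamma x) x :=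
  ((differentiableAt_Gamma_of_pos hx).log (Gamma_pos_of_pos hx).ne').hasDerivAt

lemma digamma_one : digamma 1 = -eulerMascheroniConstant := by
  rw [digamma, deriv.log hasDerivAt_Gamma_one.differentiableAt (by simp),
    hasDerivAt_Gamma_one.deriv, Gamma_one, div_one]

lemma digamma_add_one (hx : 0 < x) : digamma (x + 1) = digamma x + 1 / x := by
  have hshift : HasDerivAt (fun y => log (Gamma (y + 1))) (digamma (x + 1)) x :=
    (hasDerivAt_log_Gamma (by positivity)).comp_add_const x 1
  have hsum : HasDerivAt (fun y => log y + log (Gamma y)) (x⁻¹ + digamma x) x :=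
    (hasDerivAt_log hx.ne').add (hasDerivAt_log_Gamma hx)
  have heq : (fun y => log (Gamma (y + 1))) =ᶠ[𝓝 x] fun y => log y + log (Gamma y) := by
    filter_upwards [eventually_gt_nhds hx] with y hy
    rw [Gamma_add_one hy.ne', log_mul hy.ne' (Gamma_pos_of_pos hy).ne']
  rw [hshift.unique (hsum.congr_of_eventuallyEq heq), one_div, add_comm]

end Digamma

section Beta

variable {s r u : ℝ}

lemma beta_one_left (hr : 0 < r) : beta 1 r = 1 / r := by
  have hΓ := (Gamma_pos_of_pos hr).ne'
  rw [beta, add_comm, Gamma_add_one hr.ne', Gamma_one]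
  field_simp

lemma hasDerivAt_log_beta_left (hs : 0 < s) (hr : 0 < r) :
    HasDerivAt (fun x => log (beta x r)) (digamma s - digamma (s + r)) s := by
  have hderiv : HasDerivAt (fun x => log (Gamma x) + log (Gamma r) - log (Gamma (x + r)))
      (digamma s - digamma (s + r)) s :=
    ((hasDerivAt_log_Gamma hs).add_const _).sub
      ((hasDerivAt_log_Gamma (add_pos hs hr)).comp_add_const s r)
  refine hderiv.congr_of_eventuallyEq ?_
  filter_upwards [eventually_gt_nhds hs] with x hx
  have hx' := (Gamma_pos_of_pos hx).ne'
  have hr' := (Gamma_pos_of_pos hr).ne'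
  rw [beta, log_div (mul_ne_zero hx' hr') (Gamma_pos_of_pos (add_pos hx hr)).ne',
    log_mul hx' hr']

lemma betaPDFReal_nonneg (hs : 0 < s) (hr : 0 < r) (t : ℝ) : 0 ≤ betaPDFReal s r t := by
  by_cases ht : 0 < t ∧ t < 1
  · exact (betaPDFReal_pos ht.1 ht.2 hs hr).le
  · simp [betaPDFReal, ht]

lemma measurable_betaPDF (s r : ℝ) : Measurable (betaPDF s r) :=
  (measurable_betaPDFReal s r).ennreal_ofReal

lemma toReal_betaPDF (hs : 0 < s) (hr : 0 < r) (t : ℝ) :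
    (betaPDF s r t).toReal = betaPDFReal s r t :=
  ENNReal.toReal_ofReal (betaPDFReal_nonneg hs hr t)

lemma integral_betaMeasure (hs : 0 < s) (hr : 0 < r) (g : ℝ → ℝ) :
    ∫ t, g t ∂betaMeasure s r = ∫ t, betaPDFReal s r t * g t := by
  simp only [betaMeasure, integral_withDensity_eq_integral_toReal_smul (measurable_betaPDF s r)
    (.of_forall fun _ => ENNReal.ofReal_lt_top), toReal_betaPDF hs hr, smul_eq_mul]

lemma integrable_betaMeasure_iff (hs : 0 < s) (hr : 0 < r) {g : ℝ → ℝ} :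
    Integrable g (betaMeasure s r) ↔ Integrable fun t => betaPDFReal s r t * g t := by
  simp only [betaMeasure, integrable_withDensity_iff_integrable_smul' (measurable_betaPDF s r)
    (.of_forall fun _ => ENNReal.ofReal_lt_top), toReal_betaPDF hs hr, smul_eq_mul]

lemma integrable_betaPDFReal (hs : 0 < s) (hr : 0 < r) : Integrable (betaPDFReal s r) := by
  have := isProbabilityMeasureBeta hs hr
  simpa using (integrable_betaMeasure_iff hs hr).1 (integrable_const (1 : ℝ))

lemma integral_betaPDFReal (hs : 0 < s) (hr : 0 < r) : ∫ t, betaPDFReal s r t = 1 := by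
  have := isProbabilityMeasureBeta hs hr
  simpa using (integral_betaMeasure hs hr fun _ => 1).symm

lemma betaPDFReal_mul_exp_mul_log (hs : 0 < s) (hr : 0 < r) (hu : 0 < s + u) (t : ℝ) :
    betaPDFReal s r t * exp (u * log t) = beta (s + u) r / beta s r * betaPDFReal (s + u) r t := by
  by_cases ht : 0 < t ∧ t < 1
  · have hB := (beta_pos hs hr).ne'
    have hB' := (beta_pos hu hr).ne'
    rw [betaPDFReal, betaPDFReal, if_pos ht, if_pos ht, mul_comm u, ← rpow_def_of_pos ht.1,
      add_sub_right_comm, rpow_add ht.1]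
    field_simp
  · simp [betaPDFReal, ht]

lemma integrable_exp_mul_log_betaMeasure (hs : 0 < s) (hr : 0 < r) (hu : 0 < s + u) :
    Integrable (fun t => exp (u * log t)) (betaMeasure s r) := by
  simp only [integrable_betaMeasure_iff hs hr, betaPDFReal_mul_exp_mul_log hs hr hu]
  exact (integrable_betaPDFReal hu hr).const_mul _

lemma mgf_log_betaMeasure (hs : 0 < s) (hr : 0 < r) (hu : 0 < s + u) :
    mgf log (betaMeasure s r) u = beta (s + u) r / beta s r := by
  simp only [mgf, integral_betaMeasure hs hr, betaPDFReal_mul_exp_mul_log hs hr hu,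
    integral_const_mul, integral_betaPDFReal hu hr, mul_one]

lemma zero_mem_interior_integrableExpSet_log_betaMeasure (hs : 0 < s) (hr : 0 < r) :
    0 ∈ interior (integrableExpSet log (betaMeasure s r)) := by
  rw [mem_interior_iff_mem_nhds]
  filter_upwards [eventually_gt_nhds (neg_lt_zero.2 hs)] with u hu
  exact integrable_exp_mul_log_betaMeasure hs hr (neg_lt_iff_pos_add'.1 hu)

lemma integrable_log_betaMeasure (hs : 0 < s) (hr : 0 < r) :
    Integrable log (betaMeasure s r) :=
  integrable_of_mem_interior_integrableExpSet
    (zero_mem_interior_integrableExpSet_log_betaMeasure hs hr)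

lemma integral_log_betaMeasure (hs : 0 < s) (hr : 0 < r) :
    ∫ t, log t ∂betaMeasure s r = digamma s - digamma (s + r) := by
  have := isProbabilityMeasureBeta hs hr
  have hcgf : cgf log (betaMeasure s r) =ᶠ[𝓝 0]
      fun u => log (beta (s + u) r) - log (beta s r) := by
    filter_upwards [eventually_gt_nhds (neg_lt_zero.2 hs)] with u hu
    have hu : 0 < s + u := neg_lt_iff_pos_add'.1 hu
    rw [cgf, mgf_log_betaMeasure hs hr hu, log_div (beta_pos hu hr).ne' (beta_pos hs hr).ne']
  have hderiv : HasDerivAt (fun u => log (beta (s + u) r) - log (beta s r))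
      (digamma s - digamma (s + r)) 0 := by
    have h := hasDerivAt_log_beta_left hs hr
    rw [← add_zero s] at h
    simpa using (h.comp_const_add s 0).sub_const (log (beta s r))
  calc ∫ t, log t ∂betaMeasure s r = deriv (cgf log (betaMeasure s r)) 0 := by
        simp [deriv_cgf_zero (zero_mem_interior_integrableExpSet_log_betaMeasure hs hr)]
    _ = digamma s - digamma (s + r) := (hderiv.congr_of_eventuallyEq hcgf).deriv

lemma betaPDF_one_sub (s r t : ℝ) : betaPDF s r (1 - t) = betaPDF r s t := by
  have hmem : 0 < 1 - t ∧ 1 - t < 1 ↔ 0 < t ∧ t < 1 := by grind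
  simp only [betaPDF_eq, hmem, sub_sub_cancel, beta, add_comm s r, mul_comm (Gamma s),
    mul_right_comm]

lemma measurePreserving_one_sub_betaMeasure (s r : ℝ) :
    MeasurePreserving (fun t => 1 - t) (betaMeasure s r) (betaMeasure r s) where
  measurable := by fun_prop
  map_eq := by
    ext A hA
    have hsub := Measure.measurePreserving_sub_left volume (1 : ℝ)
    have hpre : MeasurableSet ((fun t : ℝ => 1 - t) ⁻¹' A) := hA.preimage (by fun_prop)
    rw [Measure.map_apply (by fun_prop) hA, betaMeasure, betaMeasure, withDensity_apply _ hpre,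
      withDensity_apply _ hA, ← hsub.setLIntegral_comp_preimage hA (measurable_betaPDF r s)]
    simp only [betaPDF_one_sub]

lemma integrable_log_one_sub_betaMeasure (hs : 0 < s) (hr : 0 < r) :
    Integrable (fun t => log (1 - t)) (betaMeasure s r) :=
  (measurePreserving_one_sub_betaMeasure s r).integrable_comp_of_integrable (g := log)
    (integrable_log_betaMeasure hr hs)

lemma integral_log_one_sub_betaMeasure (hs : 0 < s) (hr : 0 < r) :
    ∫ t, log (1 - t) ∂betaMeasure s r = digamma r - digamma (s + r) := by
  rw [(measurePreserving_one_sub_betaMeasure s r).integral_comp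
    (MeasurableEquiv.subLeft 1).measurableEmbedding log, integral_log_betaMeasure hr hs, add_comm]

lemma integral_const_add_mul_log_add_mul_log_one_sub_betaMeasure (hs : 0 < s) (hr : 0 < r)
    (c p q : ℝ) :
    ∫ t, (c + p * log t + q * log (1 - t)) ∂betaMeasure s r =
      c + p * (digamma s - digamma (s + r)) + q * (digamma r - digamma (s + r)) := by
  have := isProbabilityMeasureBeta hs hr
  have hlog := (integrable_log_betaMeasure hs hr).const_mul p
  have hlog_one_sub := (integrable_log_one_sub_betaMeasure hs hr).const_mul q
  have hsum : Integrable (fun t => c + p * log t) (betaMeasure s r) :=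
    (integrable_const c).add hlog
  rw [integral_add hsum hlog_one_sub, integral_add (integrable_const c) hlog, integral_const_mul,
    integral_const_mul, integral_log_betaMeasure hs hr, integral_log_one_sub_betaMeasure hs hr]
  simp

end Beta

section Kumaraswamy

variable {a b α x : ℝ}

lemma kumaraswamyPdf_eq_mul_betaPDFReal (ha : 0 < a) (hb : 0 < b) (hx : x ∈ Ioo 0 1) :
    kumaraswamyPdf a b x = a * x ^ (a - 1) * betaPDFReal 1 b (x ^ a) := by
  have hxa : 0 < x ^ a ∧ x ^ a < 1 := ⟨rpow_pos_of_pos hx.1 a, rpow_lt_one hx.1.le hx.2 ha⟩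
  rw [kumaraswamyPdf, betaPDFReal, if_pos hxa, beta_one_left hb, sub_self, rpow_zero]
  field_simp

lemma integral_kumaraswamyPdf_mul_comp_rpow (ha : 0 < a) (hb : 0 < b) (g : ℝ → ℝ) :
    ∫ x in (0 : ℝ)..1, kumaraswamyPdf a b x * g (x ^ a) = ∫ t, g t ∂betaMeasure 1 b := by
  have hzero : ∀ t ∉ Ioo (0 : ℝ) 1, betaPDFReal 1 b t = 0 := fun t ht => if_neg ht
  calc ∫ x in (0 : ℝ)..1, kumaraswamyPdf a b x * g (x ^ a)
      = ∫ x in Ioo (0 : ℝ) 1, (a * x ^ (a - 1)) • (betaPDFReal 1 b (x ^ a) * g (x ^ a)) := by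
        rw [intervalIntegral.integral_of_le zero_le_one, integral_Ioc_eq_integral_Ioo]
        refine setIntegral_congr_fun measurableSet_Ioo fun x hx => ?_
        simp only [kumaraswamyPdf_eq_mul_betaPDFReal ha hb hx, smul_eq_mul, mul_assoc]
    _ = ∫ x in Ioi (0 : ℝ), (a * x ^ (a - 1)) • (betaPDFReal 1 b (x ^ a) * g (x ^ a)) := by
        refine (setIntegral_eq_of_subset_of_forall_sdiff_eq_zero measurableSet_Ioi
          Ioo_subset_Ioi_self fun x hx => ?_).symm
        have hxa : x ^ a ∉ Ioo (0 : ℝ) 1 := fun h =>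
          hx.2 ⟨hx.1, (rpow_lt_one_iff' (le_of_lt hx.1) ha).1 h.2⟩
        simp [hzero _ hxa]
    _ = ∫ t in Ioi (0 : ℝ), betaPDFReal 1 b t * g t :=
        integral_comp_rpow_Ioi_of_pos (g := fun t => betaPDFReal 1 b t * g t) ha
    _ = ∫ t, betaPDFReal 1 b t * g t :=
        setIntegral_eq_integral_of_forall_compl_eq_zero fun t ht => by
          rw [hzero t fun h => ht h.1, zero_mul]
    _ = ∫ t, g t ∂betaMeasure 1 b := (integral_betaMeasure one_pos hb g).symm

lemma log_kumaraswamyPdf_div_betaAlphaOnePdf (ha : 0 < a) (hb : 0 < b) (hα : 0 < α)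
    (hx : x ∈ Ioo 0 1) :
    log (kumaraswamyPdf a b x / betaAlphaOnePdf α x) =
      log (a * b / α) + (a - α) / a * log (x ^ a) + (b - 1) * log (1 - x ^ a) := by
  have hx₀ : 0 < x := hx.1
  have hy : 0 < 1 - x ^ a := sub_pos.2 (rpow_lt_one hx₀.le hx.2 ha)
  have hratio : kumaraswamyPdf a b x / betaAlphaOnePdf α x =
      a * b / α * x ^ (a - α) * (1 - x ^ a) ^ (b - 1) := by
    rw [kumaraswamyPdf, betaAlphaOnePdf, ← sub_sub_sub_cancel_right a α 1,
      rpow_sub hx₀ (a - 1) (α - 1)]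
    field_simp
  rw [hratio, log_mul (by positivity) (by positivity), log_mul (by positivity) (by positivity),
    log_rpow hx₀, log_rpow hx₀, log_rpow hy]
  field_simp

end Kumaraswamy

/-- Closed-form KL divergence from the Kumaraswamy(a, b) variational posterior to the
Beta(α, 1) prior:
`KL = ((a-α)/a)(-γ - ψ(b) - 1/b) + log(ab/α) - (b-1)/b`. -/
theorem kumaraswamy_beta_kl (a b α : ℝ) (ha : 0 < a) (hb : 0 < b) (hα : 0 < α) :
    ∫ x in (0:ℝ)..1,
        kumaraswamyPdf a b x * Real.log (kumaraswamyPdf a b x / betaAlphaOnePdf α x)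
      = ((a - α)/a) * (-Real.eulerMascheroniConstant - digamma b - 1/b)
        + Real.log (a * b / α) - (b - 1)/b := by
  calc ∫ x in (0 : ℝ)..1, kumaraswamyPdf a b x * log (kumaraswamyPdf a b x / betaAlphaOnePdf α x)
      = ∫ x in (0 : ℝ)..1, kumaraswamyPdf a b x *
          (log (a * b / α) + (a - α) / a * log (x ^ a) + (b - 1) * log (1 - x ^ a)) :=
        intervalIntegral.integral_congr_Ioo_of_le zero_le_one fun x hx => by
          simp only [log_kumaraswamyPdf_div_betaAlphaOnePdf ha hb hα hx]
    _ = ∫ t, (log (a * b / α) + (a - α) / a * log t + (b - 1) * log (1 - t)) ∂betaMeasure 1 b :=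
        integral_kumaraswamyPdf_mul_comp_rpow ha hb fun t =>
          log (a * b / α) + (a - α) / a * log t + (b - 1) * log (1 - t)
    _ = log (a * b / α) + (a - α) / a * (digamma 1 - digamma (1 + b))
          + (b - 1) * (digamma b - digamma (1 + b)) :=
        integral_const_add_mul_log_add_mul_log_one_sub_betaMeasure one_pos hb _ _ _
    _ = _ := by
        rw [add_comm 1 b, digamma_add_one hb, digamma_one]
        ring
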